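/- Let n₁ and n₂ be nonzero integers with n := n₁ + n₂ ≠ 0. Define q⁰⁰(z) = sgn(n₁n₂)·( −4z·n₁n₂·(n₁² + n₂² − 6n₁n₂) − (30/z)·n₁n₂·(n₁ − n₂)² ); q⁰¹(z) = ε₁·( −n₁·(13n₁²n₂ − 65n₁n₂² + n₁³ + 19n₂³) + (30/z²)·n₁n₂²·(n₁ − n₂) ), where ε₁ = 1 if n₁n₂ > 0 and ε₁ = sgn(n₁)·sgn(n₁+n₂) if n₁n₂ < 0; q¹⁰(z) = ε₂·( −n₂·(13n₂²n₁ − 65n₂n₁² + n₂³ + 19n₁³) + (30/z²)·n₂n₁²·(n₂ − n₁) ), where ε₂ = 1 if n₁n₂ > 0 and ε₂ = sgn(n₂)·sgn(n₁+n₂) if n₁n₂ < 0; and q¹¹(z) = −4z·n₁n₂·(n₁² + n₂² − 6n₁n₂) − (14n₁³n₂ − 94n₁²n₂² + 14n₁n₂³ + n₁⁴ + n₂⁴)/z. Then the function f(y) = (32π·σ₂(|n₁|)·σ₂(|n₂|)) / (3·|n₁n₂|·|n|⁵) · ∑_{i,j ∈ {0,1}} q^{ij}(π|n|y)·K_i(2π|n₁|y)·K_j(2π|n₂|y)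 satisfies y²·f''(y) − (12 + 4π²n²y²)·f(y) = −64π²·y·(σ₂(|n₁|)·σ₂(|n₂|)/|n₁n₂|)·K₁(2π|n₁|y)·K₁(2π|n₂|y) for all y > 0. -/

import Mathlib

open Real

/-- Modified Bessel function `K₀`. -/
noncomputable def K0 (x : ℝ) : ℝ := ∫ t in Set.Ioi (0 : ℝ), Real.exp (-x * Real.cosh t)

/-- Modified Bessel function `K₁`. -/
noncomputable def K1 (x : ℝ) : ℝ :=
  ∫ t in Set.Ioi (0 : ℝ), Real.exp (-x * Real.cosh t) * Real.cosh t

/-- Divisor sum `σ₂(m) = ∑_{d ∣ m} d²`. -/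
def sigma2 (m : ℕ) : ℕ := ∑ d ∈ m.divisors, d ^ 2

/-- The coefficient `q⁰⁰`. -/
noncomputable def q00 (n₁ n₂ : ℤ) (z : ℝ) : ℝ :=
  ((n₁ * n₂).sign : ℝ) *
    (-4 * z * ((n₁ : ℝ) * n₂) * ((n₁ : ℝ) ^ 2 + (n₂ : ℝ) ^ 2 - 6 * n₁ * n₂) -
      30 / z * ((n₁ : ℝ) * n₂) * ((n₁ : ℝ) - n₂) ^ 2)

/-- The sign `ε₁`. -/
noncomputable def eps1 (n₁ n₂ : ℤ) : ℝ :=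
  if 0 < n₁ * n₂ then 1 else ((n₁.sign * (n₁ + n₂).sign : ℤ) : ℝ)

/-- The sign `ε₂`. -/
noncomputable def eps2 (n₁ n₂ : ℤ) : ℝ :=
  if 0 < n₁ * n₂ then 1 else ((n₂.sign * (n₁ + n₂).sign : ℤ) : ℝ)

/-- The coefficient `q⁰¹`. -/
noncomputable def q01 (n₁ n₂ : ℤ) (z : ℝ) : ℝ :=
  eps1 n₁ n₂ *
    (-(n₁ : ℝ) * (13 * (n₁ : ℝ) ^ 2 * n₂ - 65 * (n₁ : ℝ) * (n₂ : ℝ) ^ 2 + (n₁ : ℝ) ^ 3 +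
        19 * (n₂ : ℝ) ^ 3) +
      30 / z ^ 2 * ((n₁ : ℝ) * (n₂ : ℝ) ^ 2) * ((n₁ : ℝ) - n₂))

/-- The coefficient `q¹⁰`. -/
noncomputable def q10 (n₁ n₂ : ℤ) (z : ℝ) : ℝ :=
  eps2 n₁ n₂ *
    (-(n₂ : ℝ) * (13 * (n₂ : ℝ) ^ 2 * n₁ - 65 * (n₂ : ℝ) * (n₁ : ℝ) ^ 2 + (n₂ : ℝ) ^ 3 +
        19 * (n₁ : ℝ) ^ 3) +
      30 / z ^ 2 * ((n₂ : ℝ) * (n₁ : ℝ) ^ 2) * ((n₂ : ℝ) - n₁))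

/-- The coefficient `q¹¹`. -/
noncomputable def q11 (n₁ n₂ : ℤ) (z : ℝ) : ℝ :=
  -4 * z * ((n₁ : ℝ) * n₂) * ((n₁ : ℝ) ^ 2 + (n₂ : ℝ) ^ 2 - 6 * n₁ * n₂) -
    (14 * (n₁ : ℝ) ^ 3 * n₂ - 94 * (n₁ : ℝ) ^ 2 * (n₂ : ℝ) ^ 2 + 14 * (n₁ : ℝ) * (n₂ : ℝ) ^ 3 +
      (n₁ : ℝ) ^ 4 + (n₂ : ℝ) ^ 4) / z

/-- The particular solution `f̂^P_{n₁,n₂}` for `n₁, n₂ ≠ 0`, `n₁ + n₂ ≠ 0`. -/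
noncomputable def fP2 (n₁ n₂ : ℤ) (y : ℝ) : ℝ :=
  32 * π * (sigma2 n₁.natAbs : ℝ) * (sigma2 n₂.natAbs : ℝ) /
      (3 * |((n₁ * n₂ : ℤ) : ℝ)| * |((n₁ + n₂ : ℤ) : ℝ)| ^ 5) *
    (q00 n₁ n₂ (π * |((n₁ + n₂ : ℤ) : ℝ)| * y) * K0 (2 * π * |(n₁ : ℝ)| * y) *
        K0 (2 * π * |(n₂ : ℝ)| * y) +
      q01 n₁ n₂ (π * |((n₁ + n₂ : ℤ) : ℝ)| * y) * K0 (2 * π * |(n₁ : ℝ)| * y) *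
        K1 (2 * π * |(n₂ : ℝ)| * y) +
      q10 n₁ n₂ (π * |((n₁ + n₂ : ℤ) : ℝ)| * y) * K1 (2 * π * |(n₁ : ℝ)| * y) *
        K0 (2 * π * |(n₂ : ℝ)| * y) +
      q11 n₁ n₂ (π * |((n₁ + n₂ : ℤ) : ℝ)| * y) * K1 (2 * π * |(n₁ : ℝ)| * y) *
        K1 (2 * π * |(n₂ : ℝ)| * y))

/-!
The relations `K₀' = -K₁` and `K₁'(x) = -K₀(x) - K₁(x) / x` make the span of the functions
`yᵐ Kᵢ(α y) Kⱼ(β y)`, `m ∈ ℤ`, stable under differentiation, and `y² ∂² - 12 - (α + β)² y²` acts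
on these monomials by an explicit rule. The coefficients `qⁱʲ` are exactly such that the images of
all the monomials cancel except for a multiple of `y K₁ K₁`. The signs and absolute values disappear
because `K₀(|α| y)` and `sgn(α) K₁(|α| y)` satisfy the same first-order system for either sign of
`α`, so one computation with signed frequencies covers all cases.
-/

open MeasureTheory Filter Topology Set

/-- The integral `∫₀^∞ e^{-x cosh t} coshᵏ t dt`, which is `K₀` for `k = 0` and `K₁` for `k = 1`. -/
noncomputable def coshMoment (k : ℕ) (x : ℝ) : ℝ :=
  ∫ t in Ioi (0 : ℝ), exp (-x * cosh t) * cosh t ^ k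

lemma exp_neg_mul_mul_pow_le {c x : ℝ} (hc : 0 < c) (hx : 0 ≤ x) (n : ℕ) :
    exp (-c * x) * x ^ n ≤ n.factorial / c ^ n := by
  have hexp : (c * x) ^ n ≤ exp (c * x) * n.factorial :=
    (div_le_iff₀ (by positivity)).1 (pow_div_factorial_le_exp (c * x) (by positivity) n)
  rw [le_div_iff₀ (by positivity), neg_mul, exp_neg]
  calc (exp (c * x))⁻¹ * x ^ n * c ^ n = (exp (c * x))⁻¹ * (c * x) ^ n := by ring
    _ ≤ (exp (c * x))⁻¹ * (exp (c * x) * n.factorial) := by gcongr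
    _ = n.factorial := inv_mul_cancel_left₀ (exp_ne_zero _) _

lemma one_le_two_mul_cosh_mul_exp_neg (t : ℝ) : 1 ≤ 2 * cosh t * exp (-t) := by
  have hprod : exp t * exp (-t) = 1 := by rw [← exp_add, add_neg_cancel, exp_zero]
  rw [cosh_eq]
  nlinarith [sq_nonneg (exp (-t))]

lemma exp_neg_mul_cosh_mul_cosh_pow_le {c : ℝ} (hc : 0 < c) (k : ℕ) (t : ℝ) :
    exp (-c * cosh t) * cosh t ^ k ≤ 2 * ((k + 1).factorial / c ^ (k + 1)) * exp (-t) := by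
  have hcosh := cosh_pos t
  calc exp (-c * cosh t) * cosh t ^ k
      ≤ exp (-c * cosh t) * cosh t ^ k * (2 * cosh t * exp (-t)) :=
        le_mul_of_one_le_right (by positivity) (one_le_two_mul_cosh_mul_exp_neg t)
    _ = 2 * (exp (-c * cosh t) * cosh t ^ (k + 1)) * exp (-t) := by ring
    _ ≤ 2 * ((k + 1).factorial / c ^ (k + 1)) * exp (-t) := by
        gcongr
        exact exp_neg_mul_mul_pow_le hc hcosh.le (k + 1)

lemma integrableOn_exp_neg_mul_cosh_mul_cosh_pow {c : ℝ} (hc : 0 < c) (k : ℕ) :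
    IntegrableOn (fun t : ℝ => exp (-c * cosh t) * cosh t ^ k) (Ioi 0) := by
  refine Integrable.mono' ((integrableOn_exp_neg_Ioi 0).const_mul
    (2 * ((k + 1).factorial / c ^ (k + 1)))) (by fun_prop) (ae_of_all _ fun t => ?_)
  rw [norm_of_nonneg (mul_nonneg (exp_pos _).le (pow_nonneg (cosh_pos t).le k))]
  exact exp_neg_mul_cosh_mul_cosh_pow_le hc k t

lemma hasDerivAt_coshMoment (k : ℕ) {x : ℝ} (hx : 0 < x) :
    HasDerivAt (coshMoment k) (-coshMoment (k + 1) x) x := by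
  have hbound : ∀ t, ∀ y ∈ Ioi (x / 2), ‖-(exp (-y * cosh t) * cosh t ^ (k + 1))‖ ≤
      exp (-(x / 2) * cosh t) * cosh t ^ (k + 1) := by
    intro t y hy
    have := cosh_pos t
    rw [norm_neg, norm_of_nonneg (by positivity)]
    gcongr
    exact (mem_Ioi.1 hy).le
  have hderiv : ∀ t y : ℝ, HasDerivAt (fun y => exp (-y * cosh t) * cosh t ^ k)
      (-(exp (-y * cosh t) * cosh t ^ (k + 1))) y := fun t y =>
    ((((hasDerivAt_id y).neg.mul_const (cosh t)).exp).mul_const (cosh t ^ k)).congr_deriv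
      (by simp only [id, Pi.neg_apply]; ring)
  have hdiff := (hasDerivAt_integral_of_dominated_loc_of_deriv_le
    (μ := volume.restrict (Ioi 0)) (F := fun y t => exp (-y * cosh t) * cosh t ^ k)
    (Ioi_mem_nhds (half_lt_self hx))
    (Eventually.of_forall fun y => by fun_prop)
    (integrableOn_exp_neg_mul_cosh_mul_cosh_pow hx k) (by fun_prop)
    (ae_of_all _ hbound) (integrableOn_exp_neg_mul_cosh_mul_cosh_pow (half_pos hx) (k + 1))
    (ae_of_all _ fun t y _ => hderiv t y)).2
  rwa [integral_neg] at hdiff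

lemma abs_sinh_le_cosh (t : ℝ) : |sinh t| ≤ cosh t :=
  abs_le_of_sq_le_sq (by linarith [cosh_sq t]) (cosh_pos t).le

lemma tendsto_sinh_mul_exp_neg_mul_cosh_mul_cosh_pow {c : ℝ} (hc : 0 < c) (k : ℕ) :
    Tendsto (fun t => sinh t * (exp (-c * cosh t) * cosh t ^ k)) atTop (𝓝 0) := by
  have hdecay := tendsto_exp_neg_atTop_nhds_zero.const_mul
    (2 * (((k + 2).factorial : ℝ) / c ^ (k + 2)))
  rw [mul_zero] at hdecay
  refine squeeze_zero_norm (fun t => ?_) hdecay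
  have := cosh_pos t
  calc ‖sinh t * (exp (-c * cosh t) * cosh t ^ k)‖
      = |sinh t| * (exp (-c * cosh t) * cosh t ^ k) := by
        rw [norm_mul, norm_eq_abs, norm_of_nonneg (by positivity)]
    _ ≤ cosh t * (exp (-c * cosh t) * cosh t ^ k) := by gcongr; exact abs_sinh_le_cosh t
    _ = exp (-c * cosh t) * cosh t ^ (k + 1) := by ring
    _ ≤ _ := exp_neg_mul_cosh_mul_cosh_pow_le hc (k + 1) t

lemma hasDerivAt_sinh_mul_exp_neg_mul_cosh_mul_cosh_pow (c : ℝ) (k : ℕ) (t : ℝ) :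
    HasDerivAt (fun t => sinh t * (exp (-c * cosh t) * cosh t ^ k))
      ((k + 1) * (exp (-c * cosh t) * cosh t ^ (k + 1))
        - k * (exp (-c * cosh t) * cosh t ^ (k - 1))
        - c * (exp (-c * cosh t) * cosh t ^ (k + 2))
        + c * (exp (-c * cosh t) * cosh t ^ k)) t := by
  refine ((hasDerivAt_sinh t).mul ((((hasDerivAt_cosh t).const_mul (-c)).exp).mul
    ((hasDerivAt_cosh t).pow k))).congr_deriv ?_
  rcases k with _ | k
  · simp only [CharP.cast_eq_zero, pow_zero, Pi.mul_apply, Pi.one_apply]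
    linear_combination (-c * exp (-c * cosh t)) * sinh_sq t
  · simp only [Nat.cast_add, Nat.cast_one, Nat.add_sub_cancel, Pi.mul_apply, Pi.pow_apply]
    linear_combination ((k + 1) * cosh t ^ k - c * cosh t ^ (k + 1)) * exp (-c * cosh t) *
      sinh_sq t

-- Integrate the derivative of `sinh t · coshᵏ t · e^{-x cosh t}` over `(0, ∞)`; for `k = 0` the
-- truncated index `k - 1` has coefficient `0`.
lemma coshMoment_add_two {x : ℝ} (hx : 0 < x) (k : ℕ) :
    x * coshMoment (k + 2) x =
      x * coshMoment k x + (k + 1) * coshMoment (k + 1) x - k * coshMoment (k - 1) x := by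
  have hint : ∀ (c : ℝ) (j : ℕ),
      IntegrableOn (fun t => c * (exp (-x * cosh t) * cosh t ^ j)) (Ioi 0) := fun c j =>
    (integrableOn_exp_neg_mul_cosh_mul_cosh_pow hx j).const_mul c
  have hint₂ := (hint (k + 1) (k + 1)).sub (hint k (k - 1))
  have hint₃ := hint₂.sub (hint x (k + 2))
  have hftc := integral_Ioi_of_hasDerivAt_of_tendsto' (a := 0)
    (fun t _ => hasDerivAt_sinh_mul_exp_neg_mul_cosh_mul_cosh_pow x k t)
    (hint₃.add (hint x k)) (tendsto_sinh_mul_exp_neg_mul_cosh_mul_cosh_pow hx k)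
  rw [integral_add, integral_sub, integral_sub] at hftc
  · simp only [integral_const_mul, sinh_zero, zero_mul, sub_zero] at hftc
    simp only [coshMoment]
    linarith
  exacts [hint _ _, hint _ _, hint₂, hint _ _, hint₃, hint _ _]

lemma K0_eq_coshMoment : K0 = coshMoment 0 := by
  funext x
  simp only [K0, coshMoment, pow_zero, mul_one]

lemma K1_eq_coshMoment : K1 = coshMoment 1 := by
  funext x
  simp only [K1, coshMoment, pow_one]

lemma hasDerivAt_K0 {x : ℝ} (hx : 0 < x) : HasDerivAt K0 (-K1 x) x := by
  rw [K0_eq_coshMoment, K1_eq_coshMoment]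
  exact hasDerivAt_coshMoment 0 hx

lemma hasDerivAt_K1 {x : ℝ} (hx : 0 < x) : HasDerivAt K1 (-K0 x - K1 x / x) x := by
  rw [K0_eq_coshMoment, K1_eq_coshMoment]
  refine (hasDerivAt_coshMoment 1 hx).congr_deriv ?_
  have hrec := coshMoment_add_two hx 0
  simp only [CharP.cast_eq_zero, zero_mul, zero_add, one_mul, sub_zero] at hrec
  field_simp
  linarith

/-- The first-order system on `(0, ∞)` satisfied by `u 0 = K₀(α y)`, `u 1 = K₁(α y)`: it reads
`(u 0)' = -α (u 1)` and `(u 1)' = -α (u 0) - (u 1) / y`, where `Fin.rev` exchanges the indices. -/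
def IsBesselPair (α : ℝ) (u : Fin 2 → ℝ → ℝ) : Prop :=
  ∀ i, ∀ y, 0 < y → HasDerivAt (u i) (-α * u i.rev y - i * u i y / y) y

/-- The pair `K₀(|α| y)`, `sgn(α) K₁(|α| y)`, where `K₀` is continued as an even and `K₁` as an
odd function, so that negative frequencies `α` satisfy the same system as positive ones. -/
noncomputable def besselPair (α : ℝ) : Fin 2 → ℝ → ℝ :=
  ![fun y => K0 (|α| * y), fun y => SignType.sign α * K1 (|α| * y)]

lemma isBesselPair_besselPair {α : ℝ} (hα : α ≠ 0) : IsBesselPair α (besselPair α) := by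
  intro i y hy
  have hpos : 0 < |α| * y := mul_pos (abs_pos.2 hα) hy
  have hscale : HasDerivAt (fun y => |α| * y) |α| y := by
    simpa using (hasDerivAt_id y).const_mul |α|
  fin_cases i
  · refine ((hasDerivAt_K0 hpos).comp y hscale).congr_deriv ?_
    simp only [neg_mul, besselPair, Fin.zero_eta, Fin.isValue, Fin.rev_zero, Fin.reduceLast,
      Matrix.cons_val_one, Matrix.cons_val_zero, CharP.cast_eq_zero, zero_mul, zero_div, sub_zero]
    linear_combination K1 (|α| * y) * sign_mul_self α
  · refine (((hasDerivAt_K1 hpos).comp y hscale).const_mul (SignType.sign α : ℝ)).congr_deriv ?_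
    simp only [besselPair, Fin.mk_one, Fin.isValue, Fin.reduceRev, Matrix.cons_val_one,
      Matrix.cons_val_zero, neg_mul, Nat.cast_one, one_mul]
    field_simp
    linear_combination (-y * K0 (|α| * y)) * sign_mul_abs α

/-- `f` is twice differentiable on `(0, ∞)` and solves `y² f'' - (l + s² y²) f = g` there. -/
def IsModeSolution (l s : ℝ) (f g : ℝ → ℝ) : Prop :=
  ∃ f' f'' : ℝ → ℝ, ∀ y, 0 < y → HasDerivAt f (f' y) y ∧ HasDerivAt f' (f'' y) y ∧
    y ^ 2 * f'' y - (l + s ^ 2 * y ^ 2) * f y = g y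

namespace IsModeSolution

variable {l s : ℝ} {f f₁ f₂ g g₁ g₂ : ℝ → ℝ}

lemma add (h₁ : IsModeSolution l s f₁ g₁) (h₂ : IsModeSolution l s f₂ g₂) :
    IsModeSolution l s (f₁ + f₂) (g₁ + g₂) := by
  obtain ⟨f₁', f₁'', h₁⟩ := h₁
  obtain ⟨f₂', f₂'', h₂⟩ := h₂
  refine ⟨f₁' + f₂', f₁'' + f₂'', fun y hy => ?_⟩
  obtain ⟨hd₁, hd₁', he₁⟩ := h₁ y hy
  obtain ⟨hd₂, hd₂', he₂⟩ := h₂ y hy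
  refine ⟨hd₁.add hd₂, hd₁'.add hd₂', ?_⟩
  simp only [Pi.add_apply]
  linear_combination he₁ + he₂

lemma const_smul (c : ℝ) (h : IsModeSolution l s f g) :
    IsModeSolution l s (c • f) (c • g) := by
  obtain ⟨f', f'', h⟩ := h
  refine ⟨c • f', c • f'', fun y hy => ?_⟩
  obtain ⟨hd, hd', he⟩ := h y hy
  refine ⟨hd.const_smul c, hd'.const_smul c, ?_⟩
  simp only [Pi.smul_apply, smul_eq_mul]
  linear_combination c * he

lemma congr_right (h : IsModeSolution l s f g₁) (hg : ∀ y, 0 < y → g₁ y = g₂ y) :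
    IsModeSolution l s f g₂ := by
  obtain ⟨f', f'', h⟩ := h
  exact ⟨f', f'', fun y hy => ⟨(h y hy).1, (h y hy).2.1, (h y hy).2.2.trans (hg y hy)⟩⟩

lemma deriv_deriv (h : IsModeSolution l s f g) {y : ℝ} (hy : 0 < y) :
    y ^ 2 * deriv (deriv f) y - (l + s ^ 2 * y ^ 2) * f y = g y := by
  obtain ⟨f', f'', h⟩ := h
  have hderiv : deriv f =ᶠ[𝓝 y] f' := by
    filter_upwards [Ioi_mem_nhds hy] with x hx using (h x hx).1.deriv
  rw [hderiv.deriv_eq, (h y hy).2.1.deriv]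
  exact (h y hy).2.2

end IsModeSolution

section BesselMonomial

variable {α β : ℝ} {u v : Fin 2 → ℝ → ℝ}

/-- The functions `y ^ m * u i * v j`, whose span is stable under differentiation when `u` and `v`
are Bessel pairs. -/
noncomputable def besselMonomial (u v : Fin 2 → ℝ → ℝ) (m : ℤ) (i j : Fin 2) (y : ℝ) : ℝ :=
  y ^ m * (u i y * v j y)

lemma hasDerivAt_besselMonomial (hu : IsBesselPair α u) (hv : IsBesselPair β v)
    (m : ℤ) (i j : Fin 2) {y : ℝ} (hy : 0 < y) :
    HasDerivAt (besselMonomial u v m i j)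
      ((m - i - j) * besselMonomial u v (m - 1) i j y - α * besselMonomial u v m i.rev j y
        - β * besselMonomial u v m i j.rev y) y := by
  refine ((hasDerivAt_zpow m y (.inl hy.ne')).mul
    ((hu i y hy).mul (hv j y hy))).congr_deriv ?_
  simp only [besselMonomial, Pi.mul_apply, zpow_sub_one₀ hy.ne']
  field_simp
  ring

lemma cast_val_rev_fin_two (i : Fin 2) : ((i.rev : ℕ) : ℝ) = 1 - i := by
  fin_cases i <;> simp

lemma isModeSolution_besselMonomial (hu : IsBesselPair α u) (hv : IsBesselPair β v) (l : ℝ)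
    (m : ℤ) (i j : Fin 2) :
    IsModeSolution l (α + β) (besselMonomial u v m i j) fun y =>
      ((m - i - j) * (m - i - j - 1) - l) * besselMonomial u v m i j y
      - (2 * m - 2 * j - 1) * α * besselMonomial u v (m + 1) i.rev j y
      - (2 * m - 2 * i - 1) * β * besselMonomial u v (m + 1) i j.rev y
      + 2 * α * β * (besselMonomial u v (m + 2) i.rev j.rev y
        - besselMonomial u v (m + 2) i j y) := by
  have hderiv := fun m i j (y : ℝ) (hy : 0 < y) => hasDerivAt_besselMonomial hu hv m i j hy
  refine ⟨_, _, fun y hy => ⟨hderiv m i j y hy, (((hderiv (m - 1) i j y hy).const_mul _).sub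
    ((hderiv m i.rev j y hy).const_mul _)).sub ((hderiv m i j.rev y hy).const_mul _), ?_⟩⟩
  simp only [besselMonomial, Fin.rev_rev, cast_val_rev_fin_two, zpow_sub_one₀ hy.ne',
    zpow_add₀ hy.ne', Int.cast_sub, Int.cast_one, zpow_ofNat]
  field_simp
  ring

end BesselMonomial

/-- The coefficient `q⁰⁰` without its sign, for real frequencies. -/
noncomputable def realQ00 (a b z : ℝ) : ℝ :=
  -4 * z * (a * b) * (a ^ 2 + b ^ 2 - 6 * a * b) - 30 / z * (a * b) * (a - b) ^ 2

/-- The coefficient `q⁰¹` without its sign, for real frequencies; exchanging `a` and `b` gives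
`q¹⁰`. -/
noncomputable def realQ01 (a b z : ℝ) : ℝ :=
  -a * (13 * a ^ 2 * b - 65 * a * b ^ 2 + a ^ 3 + 19 * b ^ 3)
    + 30 / z ^ 2 * (a * b ^ 2) * (a - b)

/-- The coefficient `q¹¹`, for real frequencies. -/
noncomputable def realQ11 (a b z : ℝ) : ℝ :=
  -4 * z * (a * b) * (a ^ 2 + b ^ 2 - 6 * a * b)
    - (14 * a ^ 3 * b - 94 * a ^ 2 * b ^ 2 + 14 * a * b ^ 3 + a ^ 4 + b ^ 4) / z

/-- The sum `∑ qⁱʲ uᵢ vⱼ` with the sign-free coefficients for the frequencies `a` and `b`, where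
`z = κ (a + b) y`; the mode equation takes `κ = π`. -/
noncomputable def modeSum (κ a b : ℝ) (u v : Fin 2 → ℝ → ℝ) (y : ℝ) : ℝ :=
  realQ00 a b (κ * (a + b) * y) * u 0 y * v 0 y + realQ01 a b (κ * (a + b) * y) * u 0 y * v 1 y
    + realQ01 b a (κ * (a + b) * y) * u 1 y * v 0 y + realQ11 a b (κ * (a + b) * y) * u 1 y * v 1 y

lemma modeSum_eq_sum_besselMonomial (κ a b : ℝ) (u v : Fin 2 → ℝ → ℝ) :
    modeSum κ a b u v =
      (-4 * (κ * (a + b)) * (a * b) * (a ^ 2 + b ^ 2 - 6 * a * b)) •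
        (besselMonomial u v 1 0 0 + besselMonomial u v 1 1 1)
      + (-30 / (κ * (a + b)) * (a * b) * (a - b) ^ 2) • besselMonomial u v (-1) 0 0
      + (-(14 * a ^ 3 * b - 94 * a ^ 2 * b ^ 2 + 14 * a * b ^ 3 + a ^ 4 + b ^ 4)
          / (κ * (a + b))) • besselMonomial u v (-1) 1 1
      + (-a * (13 * a ^ 2 * b - 65 * a * b ^ 2 + a ^ 3 + 19 * b ^ 3)) • besselMonomial u v 0 0 1
      + (30 / (κ * (a + b)) ^ 2 * (a * b ^ 2) * (a - b)) • besselMonomial u v (-2) 0 1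
      + (-b * (13 * b ^ 2 * a - 65 * b * a ^ 2 + b ^ 3 + 19 * a ^ 3)) • besselMonomial u v 0 1 0
      + (30 / (κ * (a + b)) ^ 2 * (b * a ^ 2) * (b - a)) • besselMonomial u v (-2) 1 0 := by
  funext y
  simp only [modeSum, realQ00, realQ01, realQ11, besselMonomial, Pi.add_apply, Pi.smul_apply,
    smul_eq_mul, zpow_neg, zpow_ofNat]
  generalize κ * (a + b) = r
  ring

lemma isModeSolution_modeSum {κ a b : ℝ} {u v : Fin 2 → ℝ → ℝ} (hκ : κ ≠ 0) (hab : a + b ≠ 0)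
    (hu : IsBesselPair (2 * κ * a) u) (hv : IsBesselPair (2 * κ * b) v) :
    IsModeSolution 12 (2 * κ * a + 2 * κ * b) (modeSum κ a b u v)
      fun y => -6 * κ * (a + b) ^ 5 * y * (u 1 y * v 1 y) := by
  have hmon := isModeSolution_besselMonomial hu hv 12
  rw [modeSum_eq_sum_besselMonomial]
  refine (((((((((hmon 1 0 0).add (hmon 1 1 1)).const_smul _).add
    ((hmon (-1) 0 0).const_smul _)).add ((hmon (-1) 1 1).const_smul _)).add
    ((hmon 0 0 1).const_smul _)).add ((hmon (-2) 0 1).const_smul _)).add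
    ((hmon 0 1 0).const_smul _)).add ((hmon (-2) 1 0).const_smul _)).congr_right
    fun y hy => ?_
  simp only [besselMonomial, Pi.add_apply, Pi.smul_apply, smul_eq_mul, Fin.isValue, Fin.rev_zero,
    Fin.reduceLast, Fin.reduceRev, Fin.val_zero, Fin.val_one, Nat.cast_zero, Nat.cast_one,
    Int.cast_neg, Int.cast_zero, Int.cast_one, Int.cast_ofNat, Int.reduceAdd, Int.reduceNeg,
    zpow_neg, zpow_ofNat]
  field_simp
  ring

lemma realQ00_mul_of_sq_eq_one {s : ℝ} (hs : s ^ 2 = 1) (a b z : ℝ) :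
    realQ00 a b (s * z) = s * realQ00 a b z := by
  rcases sq_eq_one_iff.1 hs with rfl | rfl <;> (unfold realQ00; ring)

lemma realQ01_mul_of_sq_eq_one {s : ℝ} (hs : s ^ 2 = 1) (a b z : ℝ) :
    realQ01 a b (s * z) = realQ01 a b z := by
  simp only [realQ01, mul_pow, hs, one_mul]

lemma realQ11_mul_of_sq_eq_one {s : ℝ} (hs : s ^ 2 = 1) (a b z : ℝ) :
    realQ11 a b (s * z) = s * realQ11 a b z := by
  rcases sq_eq_one_iff.1 hs with rfl | rfl <;> (unfold realQ11; ring)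

lemma cast_sign_sq {n : ℤ} (hn : n ≠ 0) : (n.sign : ℝ) ^ 2 = 1 := by
  rcases hn.lt_or_gt with h | h
  · rw [Int.sign_eq_neg_one_of_neg h]; norm_num
  · rw [Int.sign_eq_one_of_pos h]; norm_num

lemma cast_sign_mul_cast (n : ℤ) : (n.sign : ℝ) * n = |(n : ℝ)| := by
  exact_mod_cast Int.sign_mul_self_eq_abs n

lemma eps1_eq_sign_mul_sign (n₁ n₂ : ℤ) : eps1 n₁ n₂ = n₁.sign * (n₁ + n₂).sign := by
  unfold eps1
  split_ifs with hpos
  · rcases pos_and_pos_or_neg_and_neg_of_mul_pos hpos with ⟨h₁, h₂⟩ | ⟨h₁, h₂⟩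
    · rw [Int.sign_eq_one_of_pos h₁, Int.sign_eq_one_of_pos (add_pos h₁ h₂)]; norm_num
    · rw [Int.sign_eq_neg_one_of_neg h₁, Int.sign_eq_neg_one_of_neg (add_neg h₁ h₂)]; norm_num
  · exact Int.cast_mul _ _

lemma eps2_eq_eps1_swap (n₁ n₂ : ℤ) : eps2 n₁ n₂ = eps1 n₂ n₁ := by
  rw [eps1, eps2, mul_comm n₁, add_comm n₁]

lemma q00_eq_sign_mul_realQ00 (n₁ n₂ : ℤ) (z : ℝ) :
    q00 n₁ n₂ z = n₁.sign * n₂.sign * realQ00 n₁ n₂ z := by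
  rw [q00, realQ00, Int.sign_mul, Int.cast_mul]

lemma q01_eq_sign_mul_realQ01 (n₁ n₂ : ℤ) (z : ℝ) :
    q01 n₁ n₂ z = n₁.sign * (n₁ + n₂).sign * realQ01 n₁ n₂ z := by
  rw [q01, realQ01, eps1_eq_sign_mul_sign]

lemma q10_eq_q01_swap (n₁ n₂ : ℤ) (z : ℝ) : q10 n₁ n₂ z = q01 n₂ n₁ z := by
  rw [q10, q01, eps2_eq_eps1_swap]

lemma q11_eq_realQ11 (n₁ n₂ : ℤ) (z : ℝ) : q11 n₁ n₂ z = realQ11 n₁ n₂ z := rfl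

lemma besselPair_two_pi_mul_zero (n : ℤ) (y : ℝ) :
    besselPair (2 * π * n) 0 y = K0 (2 * π * |(n : ℝ)| * y) := by
  simp only [besselPair, abs_mul, abs_of_pos two_pi_pos, Matrix.cons_val_zero]

lemma besselPair_two_pi_mul_one (n : ℤ) (y : ℝ) :
    besselPair (2 * π * n) 1 y = n.sign * K1 (2 * π * |(n : ℝ)| * y) := by
  simp [besselPair, abs_mul, abs_of_pos two_pi_pos, sign_mul, sign_pos, pi_pos, Int.sign_eq_sign]

lemma fP2_eq_smul_modeSum {n₁ n₂ : ℤ} (h₁ : n₁ ≠ 0) (h₂ : n₂ ≠ 0) (h : n₁ + n₂ ≠ 0) :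
    fP2 n₁ n₂ =
      (32 * π * sigma2 n₁.natAbs * sigma2 n₂.natAbs /
          (3 * |((n₁ * n₂ : ℤ) : ℝ)| * |((n₁ + n₂ : ℤ) : ℝ)| ^ 5) *
        (n₁.sign * n₂.sign * (n₁ + n₂).sign)) •
      modeSum π n₁ n₂ (besselPair (2 * π * n₁)) (besselPair (2 * π * n₂)) := by
  funext y
  have hs := cast_sign_sq h
  have hz : π * |((n₁ + n₂ : ℤ) : ℝ)| * y = (n₁ + n₂).sign * (π * (n₁ + n₂) * y) := by
    rw [← cast_sign_mul_cast, Int.cast_add]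
    ring
  rw [fP2, hz, q10_eq_q01_swap, q00_eq_sign_mul_realQ00, q01_eq_sign_mul_realQ01,
    q01_eq_sign_mul_realQ01, q11_eq_realQ11, realQ00_mul_of_sq_eq_one hs,
    realQ01_mul_of_sq_eq_one hs, realQ01_mul_of_sq_eq_one hs, realQ11_mul_of_sq_eq_one hs,
    add_comm n₂]
  simp only [Pi.smul_apply, smul_eq_mul, modeSum, besselPair_two_pi_mul_zero,
    besselPair_two_pi_mul_one]
  rw [mul_assoc (32 * π * _ * _ / _)]
  congr 1
  linear_combination -((n₁ + n₂).sign * n₁.sign * realQ01 n₁ n₂ (π * (n₁ + n₂) * y) *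
      K0 (2 * π * |(n₁ : ℝ)| * y) * K1 (2 * π * |(n₂ : ℝ)| * y)) * cast_sign_sq h₂
    - ((n₁ + n₂).sign * n₂.sign * realQ01 n₂ n₁ (π * (n₁ + n₂) * y) *
      K1 (2 * π * |(n₁ : ℝ)| * y) * K0 (2 * π * |(n₂ : ℝ)| * y)) * cast_sign_sq h₁
    - ((n₁ + n₂).sign * realQ11 n₁ n₂ (π * (n₁ + n₂) * y) *
      K1 (2 * π * |(n₁ : ℝ)| * y) * K1 (2 * π * |(n₂ : ℝ)| * y)) *
        (n₂.sign ^ 2 * cast_sign_sq h₁ + cast_sign_sq h₂)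

lemma isModeSolution_fP2 {n₁ n₂ : ℤ} (h₁ : n₁ ≠ 0) (h₂ : n₂ ≠ 0) (h : n₁ + n₂ ≠ 0) :
    IsModeSolution 12 (2 * π * n₁ + 2 * π * n₂) (fP2 n₁ n₂) fun y =>
      -64 * π ^ 2 * y *
        ((sigma2 n₁.natAbs : ℝ) * (sigma2 n₂.natAbs : ℝ) / |((n₁ * n₂ : ℤ) : ℝ)|) *
        K1 (2 * π * |(n₁ : ℝ)| * y) * K1 (2 * π * |(n₂ : ℝ)| * y) := by
  have hpair : ∀ n : ℤ, n ≠ 0 → IsBesselPair (2 * π * n) (besselPair (2 * π * n)) := fun n hn =>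
    isBesselPair_besselPair (mul_ne_zero two_pi_pos.ne' (Int.cast_ne_zero.2 hn))
  have hsum : (n₁ + n₂ : ℝ) ≠ 0 := by exact_mod_cast h
  have habs : |(n₁ + n₂ : ℝ)| ≠ 0 := abs_ne_zero.2 hsum
  have hsign : ((n₁ + n₂).sign : ℝ) * (n₁ + n₂ : ℝ) ^ 5 = |(n₁ + n₂ : ℝ)| ^ 5 := by
    rw [← Int.cast_add, ← cast_sign_mul_cast, mul_pow]
    linear_combination (-(n₁ + n₂).sign * ((n₁ + n₂).sign ^ 2 + 1) * ((n₁ + n₂ : ℤ) : ℝ) ^ 5) *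
      cast_sign_sq h
  rw [fP2_eq_smul_modeSum h₁ h₂ h]
  refine ((isModeSolution_modeSum pi_ne_zero hsum (hpair n₁ h₁) (hpair n₂ h₂)).const_smul
    _).congr_right fun y _ => ?_
  simp only [Pi.smul_apply, smul_eq_mul, besselPair_two_pi_mul_one, Int.cast_add]
  calc _ = -64 * π ^ 2 * y *
        ((sigma2 n₁.natAbs : ℝ) * (sigma2 n₂.natAbs : ℝ) / |((n₁ * n₂ : ℤ) : ℝ)|) *
        K1 (2 * π * |(n₁ : ℝ)| * y) * K1 (2 * π * |(n₂ : ℝ)| * y) * (n₁.sign ^ 2 * n₂.sign ^ 2 *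
          (((n₁ + n₂).sign * (n₁ + n₂ : ℝ) ^ 5) / |(n₁ + n₂ : ℝ)| ^ 5)) := by
        ring
    _ = _ := by
        rw [cast_sign_sq h₁, cast_sign_sq h₂, hsign, div_self (pow_ne_zero 5 habs)]
        ring

/-- `fP2 n₁ n₂` solves the inhomogeneous ODE for the `(n₁,n₂)` mode. -/
theorem mode_n1n2_ode (n₁ n₂ : ℤ) (h₁ : n₁ ≠ 0) (h₂ : n₂ ≠ 0) (h : n₁ + n₂ ≠ 0) :
    ∀ y : ℝ, 0 < y →
      y ^ 2 * deriv (deriv (fP2 n₁ n₂)) y -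
          (12 + 4 * π ^ 2 * ((n₁ + n₂ : ℤ) : ℝ) ^ 2 * y ^ 2) * fP2 n₁ n₂ y
      = -64 * π ^ 2 * y *
          ((sigma2 n₁.natAbs : ℝ) * (sigma2 n₂.natAbs : ℝ) / |((n₁ * n₂ : ℤ) : ℝ)|) *
          K1 (2 * π * |(n₁ : ℝ)| * y) * K1 (2 * π * |(n₂ : ℝ)| * y) := by
  intro y hy
  have hode := (isModeSolution_fP2 h₁ h₂ h).deriv_deriv hy
  rw [← hode]
  push_cast
  ring
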